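/- A regular category C is a Mal'tsev category if and only if the Ord-category 𝕆(C) of internal preorders in C, with the preorder on morphisms defined by (f,f̄) ≼ (g,ḡ): (X,R)→(Y,S) iff (f,g) ∈_X S, is an Ord-Mal'tsev category. -/

import Mathlib

open CategoryTheory

universe w v u

/-- An `Ord`-enrichment of a category: a preorder on each hom-set,
preserved by composition on both sides. -/
class OrdEnrichment (C : Type u) [Category.{v} C] : Type (max u v) where
  ord : ∀ {X Y : C}, (X ⟶ Y) → (X ⟶ Y) → Prop
  ord_refl : ∀ {X Y : C} (f : X ⟶ Y), ord f f
  ord_trans : ∀ {X Y : C} {f g h : X ⟶ Y}, ord f g → ord g h → ord f h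
  precomp_ord : ∀ {X Y Z : C} (e : X ⟶ Y) {f g : Y ⟶ Z}, ord f g → ord (e ≫ f) (e ≫ g)
  postcomp_ord : ∀ {X Y Z : C} {f g : X ⟶ Y} (h : Y ⟶ Z), ord f g → ord (f ≫ h) (g ≫ h)

/-- The preorder on hom-sets of an `Ord`-category. -/
def homLe {C : Type u} [Category.{v} C] [OrdEnrichment C] {X Y : C} (f g : X ⟶ Y) : Prop :=
  OrdEnrichment.ord f g

infixl:50 " ≼ " => homLe

section

variable {C : Type u} [Category.{v} C] [OrdEnrichment C]

/-- A full (ff-) morphism. -/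
def IsFF {X Y : C} (m : X ⟶ Y) : Prop :=
  ∀ {A : C} (a a' : A ⟶ X), (a ≫ m) ≼ (a' ≫ m) → a ≼ a'

/-- An ff-monomorphism: a full monomorphism. -/
def IsFFMono {X Y : C} (m : X ⟶ Y) : Prop := IsFF m ∧ Mono m

/-- An so-morphism: a morphism left orthogonal to every ff-monomorphism. -/
def IsSO {A B : C} (e : A ⟶ B) : Prop :=
  ∀ {X Y : C} (m : X ⟶ Y), IsFFMono m → ∀ (u : A ⟶ X) (v : B ⟶ Y),
    u ≫ m = e ≫ v → ∃ d : B ⟶ X, e ≫ d = u ∧ d ≫ m = v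

/-- The (strict) comma object square for the ordered pair `(f, g)`. -/
structure IsCommaSq {X Y Z : C} (f : X ⟶ Y) (g : Z ⟶ Y) (P : C)
    (π₁ : P ⟶ X) (π₂ : P ⟶ Z) : Prop where
  le : (π₁ ≫ f) ≼ (π₂ ≫ g)
  lift : ∀ {A : C} (α : A ⟶ X) (β : A ⟶ Z), (α ≫ f) ≼ (β ≫ g) →
    ∃! h : A ⟶ P, h ≫ π₁ = α ∧ h ≫ π₂ = β
  lift_ord : ∀ {A : C} {h h' : A ⟶ P}, (h ≫ π₁) ≼ (h' ≫ π₁) → (h ≫ π₂) ≼ (h' ≫ π₂) → h ≼ h'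

/-- A 2-pullback square (pullback with the `Ord`-enriched universal property). -/
structure Is2Pullback {X Y Z : C} (f : X ⟶ Z) (g : Y ⟶ Z) (P : C)
    (p : P ⟶ X) (q : P ⟶ Y) : Prop where
  comm : p ≫ f = q ≫ g
  lift : ∀ {A : C} (a : A ⟶ X) (b : A ⟶ Y), a ≫ f = b ≫ g →
    ∃! h : A ⟶ P, h ≫ p = a ∧ h ≫ q = b
  lift_ord : ∀ {A : C} {h h' : A ⟶ P}, (h ≫ p) ≼ (h' ≫ p) → (h ≫ q) ≼ (h' ≫ q) → h ≼ h'

/-- A binary 2-product. -/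
structure Is2Product (X Y : C) (P : C) (p : P ⟶ X) (q : P ⟶ Y) : Prop where
  lift : ∀ {A : C} (a : A ⟶ X) (b : A ⟶ Y), ∃! h : A ⟶ P, h ≫ p = a ∧ h ≫ q = b
  lift_ord : ∀ {A : C} {h h' : A ⟶ P}, (h ≫ p) ≼ (h' ≫ p) → (h ≫ q) ≼ (h' ≫ q) → h ≼ h'

/-- A 2-equalizer. -/
structure Is2Equalizer {X Y : C} (f g : X ⟶ Y) (E : C) (i : E ⟶ X) : Prop where
  comm : i ≫ f = i ≫ g
  lift : ∀ {A : C} (a : A ⟶ X), a ≫ f = a ≫ g → ∃! h : A ⟶ E, h ≫ i = a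
  lift_ord : ∀ {A : C} {h h' : A ⟶ E}, (h ≫ i) ≼ (h' ≫ i) → h ≼ h'

/-- A bicoinserter of a parallel pair. -/
structure IsBicoinserter {X A E : C} (a b : X ⟶ A) (e : A ⟶ E) : Prop where
  le : (a ≫ e) ≼ (b ≫ e)
  desc : ∀ {F : C} (f : A ⟶ F), (a ≫ f) ≼ (b ≫ f) →
    ∃ t : E ⟶ F, (e ≫ t) ≼ f ∧ f ≼ (e ≫ t)
  desc_ord : ∀ {F : C} {f f' : A ⟶ F} {t t' : E ⟶ F},
    (e ≫ t) ≼ f → f ≼ (e ≫ t) → (e ≫ t') ≼ f' → f' ≼ (e ≫ t') → f ≼ f' → t ≼ t'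

/-- A relation from `X` to `Y` in an `Ord`-category: a jointly ff-monomorphic span. -/
structure RelStr (X Y : C) : Type (max u v) where
  obj : C
  p : obj ⟶ X
  q : obj ⟶ Y
  jointly_ff : ∀ {A : C} (a a' : A ⟶ obj), (a ≫ p) ≼ (a' ≫ p) → (a ≫ q) ≼ (a' ≫ q) → a ≼ a'
  jointly_mono : ∀ {A : C} (a a' : A ⟶ obj), a ≫ p = a' ≫ p → a ≫ q = a' ≫ q → a = a'

/-- `(x, y) ∈_A R`. -/
def RelStr.Mem {X Y : C} (R : RelStr X Y) {A : C} (x : A ⟶ X) (y : A ⟶ Y) : Prop :=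
  ∃ h : A ⟶ R.obj, h ≫ R.p = x ∧ h ≫ R.q = y

/-- `R ⊆ S`: `R` factors through `S` (over `X × Y`). -/
def RelStr.Sub {X Y : C} (R S : RelStr X Y) : Prop :=
  ∃ φ : R.obj ⟶ S.obj, φ ≫ S.p = R.p ∧ φ ≫ S.q = R.q

/-- `R ≅ S`: mutual factorisation. -/
def RelStr.Iso {X Y : C} (R S : RelStr X Y) : Prop := R.Sub S ∧ S.Sub R

/-- The opposite relation `R°`. -/
def RelStr.op {X Y : C} (R : RelStr X Y) : RelStr Y X where
  obj := R.obj
  p := R.q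
  q := R.p
  jointly_ff := fun a a' h1 h2 => R.jointly_ff a a' h2 h1
  jointly_mono := fun a a' h1 h2 => R.jointly_mono a a' h2 h1

/-- A relation is an (order) ideal when it is closed under lowering the first
coordinate and raising the second coordinate. -/
def IsIdealRel {X Y : C} (R : RelStr X Y) : Prop :=
  ∀ {A : C} (x x' : A ⟶ X) (y y' : A ⟶ Y), x' ≼ x → R.Mem x y → y ≼ y' → R.Mem x' y'

/-- The relation `f_♯` given by the span `(1_X, f)`. -/
def sharpRel {X Y : C} (f : X ⟶ Y) : RelStr X Y where
  obj := X
  p := 𝟙 X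
  q := f
  jointly_ff := fun a a' h1 _ => by simpa using h1
  jointly_mono := fun a a' h1 _ => by simpa using h1

/-- The relation `f°`, the opposite of `f_♯`. -/
def cosharpRel {X Y : C} (f : X ⟶ Y) : RelStr Y X := (sharpRel f).op

/-- `M` is the meet (intersection) `R ∧ S` of two relations. -/
def IsMeetRel {X Y : C} (R S M : RelStr X Y) : Prop :=
  M.Sub R ∧ M.Sub S ∧
    ∀ {A : C} (x : A ⟶ X) (y : A ⟶ Y), R.Mem x y → S.Mem x y → M.Mem x y

/-- `T` is the composite `S ∘ R` of the relations `R : X ↬ Y` and `S : Y ↬ Z`,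
obtained via the (so-morphism, ff-monomorphism) factorisation of the span
given by the 2-pullback over the middle object. -/
def IsCompositeRel {X Y Z : C} (R : RelStr X Y) (S : RelStr Y Z) (T : RelStr X Z) : Prop :=
  ∃ (P : C) (p₁ : P ⟶ R.obj) (p₂ : P ⟶ S.obj) (e : P ⟶ T.obj),
    Is2Pullback R.q S.p P p₁ p₂ ∧ IsSO e ∧ e ≫ T.p = p₁ ≫ R.p ∧ e ≫ T.q = p₂ ≫ S.q

/-- `R` is the ideal `f_* = f / 1_Y : X ↬ Y`. -/
def IsStarRel {X Y : C} (f : X ⟶ Y) (R : RelStr X Y) : Prop :=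
  IsCommaSq f (𝟙 Y) R.obj R.p R.q

/-- `R` is the ideal `f^* = 1_Y / f : Y ↬ X`. -/
def IsCostarRel {X Y : C} (f : X ⟶ Y) (R : RelStr Y X) : Prop :=
  IsCommaSq (𝟙 Y) f R.obj R.p R.q

/-- `R` is the identity ideal `I_X = 1_X / 1_X`. -/
def IsIdRel (X : C) (R : RelStr X X) : Prop :=
  IsCommaSq (𝟙 X) (𝟙 X) R.obj R.p R.q

/-- `S` is the 2-pullback of the relation `R ↣ X × Y` along `f × g`. -/
def IsRelPullback {X Y U V : C} (R : RelStr X Y) (f : U ⟶ X) (g : V ⟶ Y)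
    (S : RelStr U V) : Prop :=
  ∃ h : S.obj ⟶ R.obj, h ≫ R.p = S.p ≫ f ∧ h ≫ R.q = S.q ≫ g ∧
    ∀ {A : C} (a : A ⟶ U) (b : A ⟶ V) (c : A ⟶ R.obj),
      c ≫ R.p = a ≫ f → c ≫ R.q = b ≫ g →
      ∃ d : A ⟶ S.obj, d ≫ S.p = a ∧ d ≫ S.q = b ∧ d ≫ h = c

/-- A binary 2-coproduct. -/
structure Is2Coproduct (X Y : C) (P : C) (i : X ⟶ P) (j : Y ⟶ P) : Prop where
  desc : ∀ {A : C} (a : X ⟶ A) (b : Y ⟶ A), ∃! h : P ⟶ A, i ≫ h = a ∧ j ≫ h = b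
  desc_ord : ∀ {A : C} {h h' : P ⟶ A}, (i ≫ h) ≼ (i ≫ h') → (j ≫ h) ≼ (j ≫ h') → h ≼ h'

/-- A ternary 2-coproduct. -/
structure Is3Coproduct (X Y Z : C) (P : C) (i : X ⟶ P) (j : Y ⟶ P) (k : Z ⟶ P) : Prop where
  desc : ∀ {A : C} (a : X ⟶ A) (b : Y ⟶ A) (c : Z ⟶ A),
    ∃! h : P ⟶ A, i ≫ h = a ∧ j ≫ h = b ∧ k ≫ h = c
  desc_ord : ∀ {A : C} {h h' : P ⟶ A},
    (i ≫ h) ≼ (i ≫ h') → (j ≫ h) ≼ (j ≫ h') → (k ≫ h) ≼ (k ≫ h') → h ≼ h'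

/-- Reflexivity of a relation on `X`: the diagonal factors through it. -/
def ReflexiveRel {X : C} (R : RelStr X X) : Prop := R.Mem (𝟙 X) (𝟙 X)

/-- Transitivity of a relation on `X`: `R ∘ R ⊆ R`. -/
def TransitiveRel {X : C} (R : RelStr X X) : Prop :=
  ∀ T : RelStr X X, IsCompositeRel R R T → T.Sub R

/-- A congruence: a reflexive and transitive ideal. -/
def IsCongruence {X : C} (R : RelStr X X) : Prop :=
  IsIdealRel R ∧ ReflexiveRel R ∧ TransitiveRel R

/-- An effective congruence: `R ≅ f^* ∘ f_*` for some morphism `f`. -/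
def EffectiveCongruence {X : C} (R : RelStr X X) : Prop :=
  ∃ (Y : C) (f : X ⟶ Y) (Fstar : RelStr X Y) (Fco : RelStr Y X) (T : RelStr X X),
    IsStarRel f Fstar ∧ IsCostarRel f Fco ∧ IsCompositeRel Fstar Fco T ∧ R.Iso T

/-- The `Ord`-enriched difunctionality property of a relation. -/
def OrdDifunctional {X Y : C} (D : RelStr X Y) : Prop :=
  ∀ {A : C} (x u u' : A ⟶ X) (y y' v : A ⟶ Y),
    D.Mem x y → y ≼ y' → D.Mem u y' → u ≼ u' → D.Mem u' v → D.Mem x v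

end

/-- A regular `Ord`-category: finite weighted limits, an
(so-morphism, ff-monomorphism) factorisation system, so-morphisms stable under
2-pullbacks, and every so-morphism the bicoinserter of its comma object projections. -/
structure IsRegularOrd (C : Type u) [Category.{v} C] [OrdEnrichment C] : Prop where
  hasTerminal : ∃ T : C, ∀ A : C, ∃ f : A ⟶ T, ∀ g : A ⟶ T, g = f
  has2Products : ∀ X Y : C, ∃ (P : C) (p : P ⟶ X) (q : P ⟶ Y), Is2Product X Y P p q
  has2Equalizers : ∀ {X Y : C} (f g : X ⟶ Y), ∃ (E : C) (i : E ⟶ X), Is2Equalizer f g E i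
  has2Pullbacks : ∀ {X Y Z : C} (f : X ⟶ Z) (g : Y ⟶ Z),
    ∃ (P : C) (p : P ⟶ X) (q : P ⟶ Y), Is2Pullback f g P p q
  hasCommaObjects : ∀ {X Y Z : C} (f : X ⟶ Y) (g : Z ⟶ Y),
    ∃ (P : C) (p : P ⟶ X) (q : P ⟶ Z), IsCommaSq f g P p q
  fact : ∀ {X Y : C} (f : X ⟶ Y), ∃ (I : C) (e : X ⟶ I) (m : I ⟶ Y),
    IsSO e ∧ IsFFMono m ∧ e ≫ m = f
  so_pullback_stable : ∀ {X Y Z P : C} (f : X ⟶ Z) (g : Y ⟶ Z) (p : P ⟶ X) (q : P ⟶ Y),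
    Is2Pullback f g P p q → IsSO g → IsSO p
  so_bicoinserter : ∀ {A B P : C} (e : A ⟶ B), IsSO e →
    ∀ (π₁ π₂ : P ⟶ A), IsCommaSq e e P π₁ π₂ → IsBicoinserter π₁ π₂ e

/-- An `Ord`-Mal'tsev category: every ideal is `Ord`-difunctional. -/
def IsOrdMaltsev (C : Type u) [Category.{v} C] [OrdEnrichment C] : Prop :=
  ∀ (X Y : C) (D : RelStr X Y), IsIdealRel D → OrdDifunctional D

/-- An `Ord`-W-Mal'tsev object: every ideal is `Ord`-difunctional with respect to
generalised elements with domain `Y`. -/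
def IsOrdWMaltsevObj {C : Type u} [Category.{v} C] [OrdEnrichment C] (Y : C) : Prop :=
  ∀ (X Z : C) (R : RelStr X Z), IsIdealRel R →
    ∀ (x u u' : Y ⟶ X) (z z' v : Y ⟶ Z),
      R.Mem x z → z ≼ z' → R.Mem u z' → u ≼ u' → R.Mem u' v → R.Mem x v


/-- An ordinary relation in a (1-dimensional) category: a jointly monomorphic span. -/
structure OrdinaryRel {C : Type u} [Category.{v} C] (X Y : C) : Type (max u v) where
  obj : C
  p : obj ⟶ X
  q : obj ⟶ Y
  jointly_mono : ∀ {A : C} (a a' : A ⟶ obj), a ≫ p = a' ≫ p → a ≫ q = a' ≫ q → a = a'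

def OrdinaryRel.Mem {C : Type u} [Category.{v} C] {X Y : C} (R : OrdinaryRel X Y)
    {A : C} (x : A ⟶ X) (y : A ⟶ Y) : Prop :=
  ∃ h : A ⟶ R.obj, h ≫ R.p = x ∧ h ≫ R.q = y

/-- A Mal'tsev category: every ordinary relation is difunctional. -/
def IsMaltsevCat (C : Type u) [Category.{v} C] : Prop :=
  ∀ (X Y : C) (D : OrdinaryRel X Y) (W : C) (x u : W ⟶ X) (y v : W ⟶ Y),
    D.Mem x y → D.Mem u y → D.Mem u v → D.Mem x v

/-- A strong epimorphism, via left orthogonality to monomorphisms. -/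
def IsStrongEpiOrtho {C : Type u} [Category.{v} C] {A B : C} (e : A ⟶ B) : Prop :=
  ∀ {X Y : C} (m : X ⟶ Y), Mono m → ∀ (u : A ⟶ X) (v : B ⟶ Y),
    u ≫ m = e ≫ v → ∃ d : B ⟶ X, e ≫ d = u ∧ d ≫ m = v

/-- A (1-dimensional) regular category: finite limits, (strong epi, mono)
factorisations, and strong epimorphisms stable under pullback. -/
structure IsRegularCat (C : Type u) [Category.{v} C] : Prop where
  hasTerminal : ∃ T : C, ∀ A : C, ∃ f : A ⟶ T, ∀ g : A ⟶ T, g = f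
  hasBinaryProducts : ∀ X Y : C, ∃ (P : C) (p : P ⟶ X) (q : P ⟶ Y),
    ∀ {A : C} (a : A ⟶ X) (b : A ⟶ Y), ∃! h : A ⟶ P, h ≫ p = a ∧ h ≫ q = b
  hasEqualizers : ∀ {X Y : C} (f g : X ⟶ Y), ∃ (E : C) (i : E ⟶ X), i ≫ f = i ≫ g ∧
    ∀ {A : C} (a : A ⟶ X), a ≫ f = a ≫ g → ∃! h : A ⟶ E, h ≫ i = a
  fact : ∀ {X Y : C} (f : X ⟶ Y), ∃ (I : C) (e : X ⟶ I) (m : I ⟶ Y),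
    IsStrongEpiOrtho e ∧ Mono m ∧ e ≫ m = f
  stable : ∀ {X Y Z P : C} (f : X ⟶ Z) (g : Y ⟶ Z) (p : P ⟶ X) (q : P ⟶ Y),
    p ≫ f = q ≫ g →
    (∀ {A : C} (a : A ⟶ X) (b : A ⟶ Y), a ≫ f = b ≫ g →
      ∃! h : A ⟶ P, h ≫ p = a ∧ h ≫ q = b) →
    IsStrongEpiOrtho g → IsStrongEpiOrtho p

/-- An internal preorder in `C`: an ordinary reflexive and transitive relation
`R ↣ X × X`. -/
structure PreordObj (C : Type u) [Category.{v} C] : Type (max u v) where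
  X : C
  R : C
  r1 : R ⟶ X
  r2 : R ⟶ X
  jmono : ∀ {A : C} (a a' : A ⟶ R), a ≫ r1 = a' ≫ r1 → a ≫ r2 = a' ≫ r2 → a = a'
  refl : ∃ e : X ⟶ R, e ≫ r1 = 𝟙 X ∧ e ≫ r2 = 𝟙 X
  trans : ∀ {A : C} (x y z : A ⟶ X),
    (∃ h : A ⟶ R, h ≫ r1 = x ∧ h ≫ r2 = y) → (∃ h : A ⟶ R, h ≫ r1 = y ∧ h ≫ r2 = z) →
    ∃ h : A ⟶ R, h ≫ r1 = x ∧ h ≫ r2 = z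

/-- A morphism of internal preorders: a pair `(f, f̄)` compatible with the relations. -/
structure PreordHom {C : Type u} [Category.{v} C] (P Q : PreordObj C) : Type v where
  f : P.X ⟶ Q.X
  fbar : P.R ⟶ Q.R
  comm1 : fbar ≫ Q.r1 = P.r1 ≫ f
  comm2 : fbar ≫ Q.r2 = P.r2 ≫ f

/-- The category `O(C)` of internal preorders in `C`. -/
instance PreordObj.category {C : Type u} [Category.{v} C] :
    Category.{v} (PreordObj C) where
  Hom P Q := PreordHom P Q
  id P := ⟨𝟙 P.X, 𝟙 P.R, by simp, by simp⟩
  comp u v := ⟨u.f ≫ v.f, u.fbar ≫ v.fbar, by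
      rw [Category.assoc, v.comm1, ← Category.assoc, u.comm1, Category.assoc], by
      rw [Category.assoc, v.comm2, ← Category.assoc, u.comm2, Category.assoc]⟩
  id_comp := by
    intro P Q u
    cases u
    dsimp only [CategoryStruct.comp, CategoryStruct.id]
    congr 1 <;> simp
  comp_id := by
    intro P Q u
    cases u
    dsimp only [CategoryStruct.comp, CategoryStruct.id]
    congr 1 <;> simp
  assoc := by
    intro P Q R' S' u v w
    dsimp only [CategoryStruct.comp]
    congr 1 <;> simp

/-- The `Ord`-enrichment of `O(C)`, giving `𝕆(C)`:
`(f, f̄) ≼ (g, ḡ) : (X, R) → (Y, S)` iff `(f, g) ∈_X S`. -/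
instance PreordObj.ordEnrichment {C : Type u} [Category.{v} C] :
    OrdEnrichment (PreordObj C) where
  ord {P Q} u v := ∃ h : P.X ⟶ Q.R, h ≫ Q.r1 = u.f ∧ h ≫ Q.r2 = v.f
  ord_refl := by
    intro P Q u
    obtain ⟨e, he1, he2⟩ := Q.refl
    exact ⟨u.f ≫ e, by rw [Category.assoc, he1, Category.comp_id],
      by rw [Category.assoc, he2, Category.comp_id]⟩
  ord_trans := by
    rintro P Q u v w ⟨h1, h11, h12⟩ ⟨h2, h21, h22⟩
    exact Q.trans u.f v.f w.f ⟨h1, h11, h12⟩ ⟨h2, h21, h22⟩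
  precomp_ord := by
    rintro P Q R' e u v ⟨h, h1, h2⟩
    exact ⟨e.f ≫ h, by rw [Category.assoc, h1]; rfl, by rw [Category.assoc, h2]; rfl⟩
  postcomp_ord := by
    rintro P Q R' u v k ⟨h, h1, h2⟩
    refine ⟨h ≫ k.fbar, ?_, ?_⟩
    · rw [Category.assoc, k.comm1, ← Category.assoc, h1]; rfl
    · rw [Category.assoc, k.comm2, ← Category.assoc, h2]; rfl

/-!
A relation `D` in `𝕆(C)` has an underlying ordinary relation in `C`, and joint fullness says
that `D` carries the restriction of the product preorder, so membership in `D` is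
membership in the underlying relation. If `C` is Mal'tsev, every internal preorder is symmetric,
so an ideal is closed under replacing its coordinates by `≼`-comparable ones in either direction,
and `Ord`-difunctionality reduces to ordinary difunctionality. Conversely, a relation in `C` becomes
an ideal between discrete preorders, where `≼` is equality and `Ord`-difunctionality is ordinary
difunctionality.
-/

section

variable {C : Type u} [Category.{v} C]

namespace PreordObj

variable {P Q : PreordObj C}

@[ext]
theorem hom_ext {a b : P ⟶ Q} (h : a.f = b.f) : a = b := by
  have hbar : a.fbar = b.fbar :=
    Q.jmono _ _ (by rw [a.comm1, b.comm1, h]) (by rw [a.comm2, b.comm2, h])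
  obtain ⟨f, fbar, _, _⟩ := a
  obtain ⟨g, gbar, _, _⟩ := b
  obtain rfl : f = g := h
  obtain rfl : fbar = gbar := hbar
  rfl

/-- The order relation of an internal preorder, as an ordinary relation in `C`. -/
def rel (P : PreordObj C) : OrdinaryRel P.X P.X := ⟨P.R, P.r1, P.r2, P.jmono⟩

theorem homLe_iff_rel_mem {a b : P ⟶ Q} : a ≼ b ↔ Q.rel.Mem a.f b.f := Iff.rfl

theorem rel_mem_refl (P : PreordObj C) {A : C} (x : A ⟶ P.X) : P.rel.Mem x x := by
  obtain ⟨e, he₁, he₂⟩ := P.refl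
  exact ⟨x ≫ e, by simp [rel, he₁], by simp [rel, he₂]⟩

theorem exists_hom_f_eq_iff {f : P.X ⟶ Q.X} :
    (∃ a : P ⟶ Q, a.f = f) ↔ Q.rel.Mem (P.r1 ≫ f) (P.r2 ≫ f) := by
  constructor
  · rintro ⟨a, rfl⟩
    exact ⟨a.fbar, a.comm1, a.comm2⟩
  · rintro ⟨fbar, h₁, h₂⟩
    exact ⟨⟨f, fbar, h₁, h₂⟩, rfl⟩

/-- The discrete internal preorder on `A`, whose order relation is the diagonal. -/
abbrev discrete (A : C) : PreordObj C where
  X := A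
  R := A
  r1 := 𝟙 A
  r2 := 𝟙 A
  jmono a a' h _ := by simpa using h
  refl := ⟨𝟙 A, by simp, by simp⟩
  trans := by
    rintro B x y z ⟨h, rfl, rfl⟩ ⟨k, hk, rfl⟩
    exact ⟨h, rfl, hk.symm⟩

theorem exists_discrete_hom {A : C} (f : A ⟶ Q.X) : ∃ a : discrete A ⟶ Q, a.f = f :=
  exists_hom_f_eq_iff.2 (Q.rel_mem_refl _)

theorem homLe_discrete_iff {A : C} {a b : P ⟶ discrete A} : a ≼ b ↔ a = b := by
  constructor
  · rintro ⟨h, h₁, h₂⟩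
    exact hom_ext (h₁.symm.trans h₂)
  · rintro rfl
    exact OrdEnrichment.ord_refl a

end PreordObj

open PreordObj

namespace RelStr

variable {P Q : PreordObj C}

/-- The ordinary relation in `C` between the underlying objects given by a relation in `𝕆(C)`. -/
def underlying (D : RelStr P Q) : OrdinaryRel P.X Q.X where
  obj := D.obj.X
  p := D.p.f
  q := D.q.f
  jointly_mono s t hp hq := by
    obtain ⟨s, rfl⟩ := exists_discrete_hom s
    obtain ⟨t, rfl⟩ := exists_discrete_hom t
    rw [D.jointly_mono s t (hom_ext hp) (hom_ext hq)]

theorem obj_rel_mem (D : RelStr P Q) {A : C} {s t : A ⟶ D.obj.X}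
    (hp : P.rel.Mem (s ≫ D.p.f) (t ≫ D.p.f)) (hq : Q.rel.Mem (s ≫ D.q.f) (t ≫ D.q.f)) :
    D.obj.rel.Mem s t := by
  obtain ⟨s, rfl⟩ := exists_discrete_hom s
  obtain ⟨t, rfl⟩ := exists_discrete_hom t
  exact D.jointly_ff s t hp hq

theorem mem_underlying_iff (D : RelStr P Q) {A : PreordObj C} {x : A ⟶ P} {y : A ⟶ Q} :
    D.underlying.Mem x.f y.f ↔ D.Mem x y := by
  constructor
  · rintro ⟨(h : A.X ⟶ D.obj.X), (hx : h ≫ D.p.f = x.f), (hy : h ≫ D.q.f = y.f)⟩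
    have h_monotone : D.obj.rel.Mem (A.r1 ≫ h) (A.r2 ≫ h) := by
      apply D.obj_rel_mem
      · simpa only [Category.assoc, hx] using exists_hom_f_eq_iff.1 ⟨x, rfl⟩
      · simpa only [Category.assoc, hy] using exists_hom_f_eq_iff.1 ⟨y, rfl⟩
    obtain ⟨a, rfl⟩ := exists_hom_f_eq_iff.2 h_monotone
    exact ⟨a, hom_ext hx, hom_ext hy⟩
  · rintro ⟨a, rfl, rfl⟩
    exact ⟨a.f, rfl, rfl⟩

end RelStr

theorem isIdealRel_of_discrete {X Y : C} (D : RelStr (discrete X) (discrete Y)) :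
    IsIdealRel D := by
  intro A x x' y y' hx h hy
  rwa [homLe_discrete_iff.1 hx, ← homLe_discrete_iff.1 hy]

theorem OrdinaryRel.exists_underlying_eq {X Y : C} (D : OrdinaryRel X Y) :
    ∃ E : RelStr (discrete X) (discrete Y), E.underlying = D := by
  obtain ⟨R, p, q, jointly_mono⟩ := D
  obtain ⟨p, rfl⟩ := exists_discrete_hom (Q := discrete X) p
  obtain ⟨q, rfl⟩ := exists_discrete_hom (Q := discrete Y) q
  have lift_mono {A : PreordObj C} (a b : A ⟶ discrete R)
      (hp : a ≫ p = b ≫ p) (hq : a ≫ q = b ≫ q) : a = b :=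
    hom_ext (jointly_mono _ _ (congrArg PreordHom.f hp) (congrArg PreordHom.f hq))
  refine ⟨⟨discrete R, p, q, fun a b hp hq => ?_, lift_mono⟩, rfl⟩
  exact homLe_discrete_iff.2 (lift_mono a b (homLe_discrete_iff.1 hp) (homLe_discrete_iff.1 hq))

namespace IsMaltsevCat

theorem mem_symm (hC : IsMaltsevCat C) {X : C} {D : OrdinaryRel X X}
    (hD : ∀ {A : C} (x : A ⟶ X), D.Mem x x) {A : C} {x y : A ⟶ X} (h : D.Mem x y) :
    D.Mem y x :=
  hC X X D A y x y x (hD y) h (hD x)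

theorem homLe_symm (hC : IsMaltsevCat C) {P Q : PreordObj C} {a b : P ⟶ Q} (h : a ≼ b) :
    b ≼ a :=
  homLe_iff_rel_mem.2 (hC.mem_symm Q.rel_mem_refl (homLe_iff_rel_mem.1 h))

theorem isOrdMaltsev_preordObj (hC : IsMaltsevCat C) : IsOrdMaltsev (PreordObj C) := by
  intro P Q D hD A x u u' y y' v hxy hy huy' hu huv
  have hu'y : D.Mem u' y := hD u u' y' y (hC.homLe_symm hu) huy' (hC.homLe_symm hy)
  rw [← D.mem_underlying_iff] at hxy hu'y huv ⊢
  exact hC _ _ D.underlying _ _ _ _ _ hxy hu'y huv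

end IsMaltsevCat

theorem isMaltsevCat_of_isOrdMaltsev_preordObj (h : IsOrdMaltsev (PreordObj C)) :
    IsMaltsevCat C := by
  intro X Y D A x u y v hxy huy huv
  obtain ⟨E, rfl⟩ := D.exists_underlying_eq
  obtain ⟨x, rfl⟩ := exists_discrete_hom (Q := discrete X) x
  obtain ⟨u, rfl⟩ := exists_discrete_hom (Q := discrete X) u
  obtain ⟨y, rfl⟩ := exists_discrete_hom (Q := discrete Y) y
  obtain ⟨v, rfl⟩ := exists_discrete_hom (Q := discrete Y) v
  rw [E.mem_underlying_iff] at hxy huy huv ⊢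
  exact h _ _ E (isIdealRel_of_discrete E) x u u y y v hxy (OrdEnrichment.ord_refl y) huy
    (OrdEnrichment.ord_refl u) huv

theorem statement16_general : IsMaltsevCat C ↔ IsOrdMaltsev (PreordObj C) :=
  ⟨IsMaltsevCat.isOrdMaltsev_preordObj, isMaltsevCat_of_isOrdMaltsev_preordObj⟩

end

/-- A regular category `C` is a Mal'tsev category if and only if the
`Ord`-category `𝕆(C)` of internal preorders in `C` is an `Ord`-Mal'tsev category. -/
theorem statement16 {C : Type u} [Category.{v} C] (hC : IsRegularCat C) :
    IsMaltsevCat C ↔ IsOrdMaltsev (PreordObj C) :=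
  statement16_general
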